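/- arXiv:2209.05543 — 2 statements merged into one kernel-verified Lean document; each statement's English description precedes it below -/
import Mathlib

section
/- If τ : I → K₊ is three times Fréchet differentiable, then D³ Ñ(ι; η, η, η) = (6 P_{τ'}(η)³ + 3 P_{τ''}(η²) P_{τ'}(η) + 3 P_{τ'}(η) P_{τ''}(η²) + P_{τ'''}(η³)) Ñ(ι), in the notation P_{τ^{(k)}}(η^k) = P_{τ(ι)}(D^k τ(ι; η,…,η)). -/
/-!
Along a segment `s ↦ τ + sv`, the law for `P` makes `g s = P_{τ + sv}(v)` a solution of the Riccati
equation `g' = g²`, so that `(1 - s g(0)) g(s) = g(0)`. Hence `P` satisfies the resolvent identity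
`P_σ(ξ) - P_τ(ξ) = P_τ(σ - τ) P_σ(ξ)`. This bounds `P` near `τ` and upgrades differentiability of
each `τ ↦ P_τ(ξ)` to differentiability in operator norm. Now `P` and `N` solve total differential
equations with smooth right-hand sides, so they are smooth. Differentiating `(N ∘ c)' = P(c') N`
twice more along the curve `c t = τ(ι + tη)` by the product rule gives the formula.
-/

open Set Filter Topology Asymptotics ContinuousLinearMap

section Riccati

variable {A : Type*} [NormedRing A] [NormedAlgebra ℝ A] {f g : ℝ → A} {t b : ℝ}

theorem hasDerivAt_one_sub_smul_mul (a : A) (hf : HasDerivAt f (g t * f t) t) :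
    HasDerivAt (fun s => (1 - s • a) * f s) (((1 - t • a) * g t - a) * f t) t := by
  have hlin : HasDerivAt (fun s : ℝ => 1 - s • a) (-a) t := by
    simpa using ((hasDerivAt_id t).smul_const a).const_sub 1
  exact (hlin.mul hf).congr_deriv (by noncomm_ring)

theorem eq_zero_of_hasDerivAt_mul (hg : ContinuousOn g (Icc 0 b))
    (hf : ∀ s ∈ Icc 0 b, HasDerivAt f (f s * g s) s) (hf₀ : f 0 = 0) (ht : t ∈ Icc 0 b) :
    f t = 0 := by
  obtain ⟨C, hC⟩ := isCompact_Icc.exists_bound_of_continuousOn hg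
  refine eq_zero_of_abs_deriv_le_mul_abs_self_of_eq_zero_right (K := C)
    (fun s hs => (hf s hs).continuousAt.continuousWithinAt)
    (fun s hs => (hf s (Ico_subset_Icc_self hs)).hasDerivWithinAt) hf₀ (fun s hs => ?_) t ht
  calc ‖f s * g s‖ ≤ ‖f s‖ * ‖g s‖ := norm_mul_le _ _
    _ ≤ ‖f s‖ * C := by gcongr; exact hC s (Ico_subset_Icc_self hs)
    _ = C * ‖f s‖ := mul_comm _ _

theorem one_sub_smul_mul_eq_of_riccati (hg : ∀ s ∈ Icc 0 b, HasDerivAt g (g s * g s) s)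
    (ht : t ∈ Icc 0 b) : (1 - t • g 0) * g t = g 0 := by
  have hcont : ContinuousOn g (Icc 0 b) := fun s hs => (hg s hs).continuousAt.continuousWithinAt
  have hdefect : ∀ s ∈ Icc 0 b, HasDerivAt (fun s => (1 - s • g 0) * g s - g 0)
      (((1 - s • g 0) * g s - g 0) * g s) s := fun s hs =>
    (hasDerivAt_one_sub_smul_mul (g 0) (hg s hs)).sub_const (g 0)
  exact sub_eq_zero.mp (eq_zero_of_hasDerivAt_mul hcont hdefect (by simp) ht)

theorem one_sub_smul_mul_eq_of_hasDerivAt_mul (hg : ∀ s ∈ Icc 0 b, HasDerivAt g (g s * g s) s)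
    (hf : ∀ s ∈ Icc 0 b, HasDerivAt f (g s * f s) s) (ht : t ∈ Icc 0 b) :
    (1 - t • g 0) * f t = f 0 := by
  have hderiv : ∀ s ∈ Icc 0 b, HasDerivAt (fun s => (1 - s • g 0) * f s) 0 s := fun s hs =>
    (hasDerivAt_one_sub_smul_mul (g 0) (hf s hs)).congr_deriv
      (by rw [one_sub_smul_mul_eq_of_riccati hg hs, sub_self, zero_mul])
  simpa using constant_of_has_deriv_right_zero
    (fun s hs => (hderiv s hs).continuousAt.continuousWithinAt)
    (fun s hs => (hderiv s (Ico_subset_Icc_self hs)).hasDerivWithinAt) t ht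

end Riccati

section Bootstrap

variable {𝕜 : Type*} [NontriviallyNormedField 𝕜] {E F : Type*} [NormedAddCommGroup E]
  [NormedSpace 𝕜 E] [NormedAddCommGroup F] [NormedSpace 𝕜 F]

theorem contDiffOn_succ_of_hasFDerivAt_comp {S : Set E} {T : Set F} (hS : IsOpen S) {f : E → F}
    {Φ : E × F → E →L[𝕜] F} (hmaps : MapsTo f S T)
    (hf : ∀ x ∈ S, HasFDerivAt f (Φ (x, f x)) x) (n : ℕ) (hΦ : ContDiffOn 𝕜 n Φ (S ×ˢ T)) :
    ContDiffOn 𝕜 (n + 1) f S := by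
  have hgraph : MapsTo (fun x => (x, f x)) S (S ×ˢ T) := fun x hx => ⟨hx, hmaps hx⟩
  have hsucc : ∀ m : ℕ, m ≤ n → ContDiffOn 𝕜 m f S → ContDiffOn 𝕜 (m + 1) f S := by
    intro m hm hfm
    refine (contDiffOn_succ_iff_fderiv_of_isOpen hS).2
      ⟨fun x hx => (hf x hx).differentiableAt.differentiableWithinAt, by simp, ?_⟩
    exact ((hΦ.of_le (mod_cast hm)).comp (contDiffOn_id.prodMk hfm) hgraph).congr
      fun x hx => (hf x hx).fderiv
  have hzero : ContDiffOn 𝕜 (0 : ℕ) f S :=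
    contDiffOn_zero.2 fun x hx => (hf x hx).continuousAt.continuousWithinAt
  have hle : ∀ m ≤ n, ContDiffOn 𝕜 m f S := by
    intro m
    induction m with
    | zero => exact fun _ => hzero
    | succ m ih => exact fun hm => mod_cast hsucc m (by lia) (ih (by lia))
  exact hsucc n le_rfl (hle n le_rfl)

end Bootstrap

section Pencil

variable {𝕜 : Type*} [NontriviallyNormedField 𝕜]
  {K : Type*} [NormedAddCommGroup K] [NormedSpace 𝕜 K]
  {A : Type*} [NormedRing A] [NormedAlgebra 𝕜 A]

/-- The bilinear map `(η, ξ) ↦ L η * L ξ`. The law `D_τ P_τ(ξ)(η) = P_τ(η) P_τ(ξ)` says that the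
differential of `P` at `τ` is `resolventDeriv (P τ)`. -/
noncomputable def resolventDeriv (L : K →L[𝕜] A) : K →L[𝕜] K →L[𝕜] A :=
  (mul 𝕜 A).bilinearComp L L

@[simp]
theorem resolventDeriv_apply (L : K →L[𝕜] A) (η ξ : K) : resolventDeriv L η ξ = L η * L ξ :=
  rfl

theorem contDiff_resolventDeriv {n : WithTop ℕ∞} :
    ContDiff 𝕜 n (resolventDeriv : (K →L[𝕜] A) → K →L[𝕜] K →L[𝕜] A) := by
  have hcomp : ContDiff 𝕜 n fun L : K →L[𝕜] A =>
      ((compL 𝕜 K A A).flip L).comp ((mul 𝕜 A).comp L) :=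
    (compL 𝕜 K A A).flip.contDiff.clm_comp (contDiff_const.clm_comp contDiff_id)
  exact hcomp

variable {P : K → K →L[𝕜] A} {S : Set K} {σ τ : K}

theorem eventually_norm_le_two_mul
    (hP : ∀ᶠ σ in 𝓝 τ, ∀ ξ, P σ ξ - P τ ξ = P τ (σ - τ) * P σ ξ) :
    ∀ᶠ σ in 𝓝 τ, ‖P σ‖ ≤ 2 * ‖P τ‖ := by
  have hcont : ContinuousAt (fun σ => ‖P τ (σ - τ)‖) τ := by fun_prop
  have hsmall : ∀ᶠ σ in 𝓝 τ, ‖P τ (σ - τ)‖ < 1 / 2 :=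
    hcont.eventually_lt continuousAt_const (by simp)
  filter_upwards [hP, hsmall] with σ hσ hlt
  refine opNorm_le_bound _ (by positivity) fun ξ => ?_
  have hnorm : ‖P σ ξ‖ ≤ ‖P τ ξ‖ + 1 / 2 * ‖P σ ξ‖ := calc
    ‖P σ ξ‖ = ‖P τ ξ + P τ (σ - τ) * P σ ξ‖ := by rw [← hσ, add_sub_cancel]
    _ ≤ ‖P τ ξ‖ + ‖P τ (σ - τ)‖ * ‖P σ ξ‖ :=
      (norm_add_le _ _).trans (by gcongr; exact norm_mul_le _ _)
    _ ≤ ‖P τ ξ‖ + 1 / 2 * ‖P σ ξ‖ := by gcongr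
  linarith [(P τ).le_opNorm ξ]

theorem hasFDerivAt_of_eventually_sub_eq_mul
    (hP : ∀ᶠ σ in 𝓝 τ, ∀ ξ, P σ ξ - P τ ξ = P τ (σ - τ) * P σ ξ) :
    HasFDerivAt P (resolventDeriv (P τ)) τ := by
  refine .of_isLittleO (IsBigO.trans_isLittleO ?_ (isLittleO_pow_sub_sub τ one_lt_two))
  refine .of_bound (‖P τ‖ ^ 2 * (2 * ‖P τ‖)) ?_
  filter_upwards [hP, eventually_norm_le_two_mul hP] with σ hσ hbound
  refine opNorm_le_bound _ (by positivity) fun ξ => ?_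
  have hremainder : (P σ - P τ - resolventDeriv (P τ) (σ - τ)) ξ =
      P τ (σ - τ) * (P τ (σ - τ) * P σ ξ) := by
    simp only [sub_apply, resolventDeriv_apply]
    rw [hσ, ← mul_sub, hσ]
  calc ‖(P σ - P τ - resolventDeriv (P τ) (σ - τ)) ξ‖
      ≤ ‖P τ (σ - τ)‖ * (‖P τ (σ - τ)‖ * ‖P σ ξ‖) := by
        rw [hremainder]
        exact (norm_mul_le _ _).trans (by gcongr; exact norm_mul_le _ _)
    _ ≤ (‖P τ‖ * ‖σ - τ‖) * ((‖P τ‖ * ‖σ - τ‖) * (2 * ‖P τ‖ * ‖ξ‖)) := by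
        gcongr <;> first | exact le_opNorm _ _ | exact le_of_opNorm_le _ hbound ξ
    _ = ‖P τ‖ ^ 2 * (2 * ‖P τ‖) * ‖‖σ - τ‖ ^ 2‖ * ‖ξ‖ := by
        rw [norm_pow, norm_norm]
        ring

theorem contDiffOn_of_hasFDerivAt_resolventDeriv (hS : IsOpen S)
    (hP : ∀ τ ∈ S, HasFDerivAt P (resolventDeriv (P τ)) τ) (n : ℕ) : ContDiffOn 𝕜 n P S :=
  (contDiffOn_succ_of_hasFDerivAt_comp (Φ := fun x => resolventDeriv x.2) hS (mapsTo_univ P S) hP n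
    (contDiff_resolventDeriv.comp_contDiffOn contDiffOn_snd)).of_le (mod_cast n.le_succ)

end Pencil

section ResolventIdentity

variable {𝕜 : Type*} [RCLike 𝕜] {K : Type*} [NormedAddCommGroup K] [NormedSpace 𝕜 K]
  {A : Type*} [NormedRing A] [NormedAlgebra 𝕜 A] {P : K → K →L[𝕜] A} {S : Set K} {σ τ : K}

theorem sub_eq_mul_of_hasFDerivAt_apply [NormedSpace ℝ K] [IsScalarTower ℝ 𝕜 K]
    (hS : StarConvex ℝ τ S)
    (hP : ∀ s ∈ S, ∀ ξ, HasFDerivAt (fun s => P s ξ) ((resolventDeriv (P s)).flip ξ) s)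
    (hσ : σ ∈ S) (ξ : K) : P σ ξ - P τ ξ = P τ (σ - τ) * P σ ξ := by
  let : NormedAlgebra ℝ A := .restrictScalars ℝ 𝕜 A
  have : IsScalarTower ℝ 𝕜 A := Real.isScalarTower
  have hline : ∀ ζ, ∀ t ∈ Icc (0 : ℝ) 1, HasDerivAt (fun t : ℝ => P (τ + t • (σ - τ)) ζ)
      (P (τ + t • (σ - τ)) (σ - τ) * P (τ + t • (σ - τ)) ζ) t := by
    intro ζ t ht
    have hsegment : HasDerivAt (fun t : ℝ => τ + t • (σ - τ)) (σ - τ) t := by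
      simpa using ((hasDerivAt_id t).smul_const (σ - τ)).const_add τ
    exact ((hP _ (hS.add_smul_sub_mem hσ ht.1 ht.2) ζ).restrictScalars ℝ).comp_hasDerivAt t hsegment
  have hone : (1 - P τ (σ - τ)) * P σ ξ = P τ ξ := by
    simpa using one_sub_smul_mul_eq_of_hasDerivAt_mul (hline (σ - τ)) (hline ξ)
      (right_mem_Icc.mpr zero_le_one)
  rw [← hone]
  noncomm_ring

theorem eventually_sub_eq_mul_of_hasFDerivAt_apply (hS : S ∈ 𝓝 τ)
    (hP : ∀ s ∈ S, ∀ ξ, HasFDerivAt (fun s => P s ξ) ((resolventDeriv (P s)).flip ξ) s) :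
    ∀ᶠ σ in 𝓝 τ, ∀ ξ, P σ ξ - P τ ξ = P τ (σ - τ) * P σ ξ := by
  let : NormedSpace ℝ K := .restrictScalars ℝ 𝕜 K
  have : IsScalarTower ℝ 𝕜 K := Real.isScalarTower
  obtain ⟨r, hr, hball⟩ := Metric.mem_nhds_iff.mp hS
  filter_upwards [Metric.ball_mem_nhds τ hr] with σ hσ
  exact sub_eq_mul_of_hasFDerivAt_apply ((convex_ball τ r).starConvex (Metric.mem_ball_self hr))
    (fun s hs => hP s (hball hs)) hσ

end ResolventIdentity

section Family

variable {𝕜 : Type*} [NontriviallyNormedField 𝕜]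
  {K : Type*} [NormedAddCommGroup K] [NormedSpace 𝕜 K]
  {H : Type*} [NormedAddCommGroup H] [NormedSpace 𝕜 H]
  {X : Type*} [NormedAddCommGroup X] [NormedSpace 𝕜 X]

/-- The linear map `ξ ↦ L ξ ∘ T`. The law `D N(τ; ξ) = P_τ(ξ) N(τ)` says that the differential of
`N` at `τ` is `compDeriv (P τ) (N τ)`. -/
noncomputable def compDeriv (L : K →L[𝕜] H →L[𝕜] H) (T : X →L[𝕜] H) : K →L[𝕜] X →L[𝕜] H :=
  ((compL 𝕜 X H H).flip T).comp L

@[simp]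
theorem compDeriv_apply (L : K →L[𝕜] H →L[𝕜] H) (T : X →L[𝕜] H) (ξ : K) :
    compDeriv L T ξ = (L ξ).comp T :=
  rfl

theorem contDiff_compDeriv {n : WithTop ℕ∞} :
    ContDiff 𝕜 n fun p : (K →L[𝕜] H →L[𝕜] H) × (X →L[𝕜] H) => compDeriv p.1 p.2 :=
  ((compL 𝕜 X H H).flip.contDiff.comp contDiff_snd).clm_comp contDiff_fst

variable {P : K → K →L[𝕜] H →L[𝕜] H} {N : K → X →L[𝕜] H} {S : Set K}

theorem contDiffOn_of_hasFDerivAt_compDeriv (hS : IsOpen S) {n : ℕ} (hP : ContDiffOn 𝕜 n P S)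
    (hN : ∀ τ ∈ S, HasFDerivAt N (compDeriv (P τ) (N τ)) τ) : ContDiffOn 𝕜 (n + 1) N S :=
  contDiffOn_succ_of_hasFDerivAt_comp (Φ := fun x => compDeriv (P x.1) x.2) hS
    (mapsTo_univ N S) hN n (contDiff_compDeriv.comp_contDiffOn
      ((hP.comp contDiffOn_fst fun _ hx => hx.1).prodMk contDiffOn_snd))

end Family

section Line

variable {𝕜 : Type*} [NontriviallyNormedField 𝕜] {E F : Type*} [NormedAddCommGroup E]
  [NormedSpace 𝕜 E] [NormedAddCommGroup F] [NormedSpace 𝕜 F]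

theorem hasLineDerivAt_iteratedFDeriv_apply_const {f : E → F} {x : E} {n : ℕ}
    (hf : ContDiffAt 𝕜 (n + 1 : ℕ) f x) (v : E) :
    HasLineDerivAt 𝕜 (fun y => iteratedFDeriv 𝕜 n f y fun _ => v)
      (iteratedFDeriv 𝕜 (n + 1) f x fun _ => v) x v := by
  have hd := hf.differentiableAt_iteratedFDeriv (m := n) (mod_cast n.lt_succ_self)
  exact (hd.hasFDerivAt.continuousMultilinear_apply_const _).hasLineDerivAt v

theorem iteratedDeriv_comp_add_smul {f : E → F} {x : E} {n : ℕ} (hf : ContDiffAt 𝕜 n f x) (v : E) :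
    iteratedDeriv n (fun t : 𝕜 => f (x + t • v)) 0 = iteratedFDeriv 𝕜 n f x fun _ => v := by
  induction n generalizing x with
  | zero => simp
  | succ n ih =>
    have hline : Tendsto (fun t : 𝕜 => x + t • v) (𝓝 0) (𝓝 x) :=
      Continuous.tendsto' (by fun_prop) _ _ (by simp)
    have hnear : iteratedDeriv n (fun t : 𝕜 => f (x + t • v)) =ᶠ[𝓝 0]
        fun t => iteratedFDeriv 𝕜 n f (x + t • v) fun _ => v := by
      filter_upwards [hline.eventually (hf.eventually (by simp))] with t ht
      rw [← ih (ht.of_le (mod_cast n.le_succ))]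
      have htranslate := congrFun
        (iteratedDeriv_comp_const_add n (fun t : 𝕜 => f (x + t • v)) t) 0
      simpa [add_smul, add_assoc] using htranslate.symm
    rw [iteratedDeriv_succ, hnear.deriv_eq]
    exact (hasLineDerivAt_iteratedFDeriv_apply_const hf v).deriv

theorem hasDerivAt_iteratedDeriv {c : 𝕜 → F} {t : 𝕜} {n : ℕ} (hc : ContDiffAt 𝕜 (n + 1 : ℕ) c t) :
    HasDerivAt (iteratedDeriv n c) (iteratedDeriv (n + 1) c t) t := by
  have hd := hc.differentiableAt_iteratedFDeriv (m := n) (mod_cast n.lt_succ_self)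
  rw [iteratedDeriv_succ]
  exact (hd.continuousMultilinear_apply_const _).hasDerivAt

end Line

section Curve

variable {𝕜 : Type*} [NontriviallyNormedField 𝕜]
  {K : Type*} [NormedAddCommGroup K] [NormedSpace 𝕜 K]
  {H : Type*} [NormedAddCommGroup H] [NormedSpace 𝕜 H]
  {X : Type*} [NormedAddCommGroup X] [NormedSpace 𝕜 X]
  {P : K → K →L[𝕜] H →L[𝕜] H} {N : K → X →L[𝕜] H} {c : 𝕜 → K} {c' : K} {t : 𝕜}

theorem hasDerivAt_resolvent_apply {A : Type*} [NormedRing A] [NormedAlgebra 𝕜 A]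
    {Q : K → K →L[𝕜] A} {x : 𝕜 → K} {x' : K} (hQ : HasFDerivAt Q (resolventDeriv (Q (c t))) (c t))
    (hc : HasDerivAt c c' t) (hx : HasDerivAt x x' t) :
    HasDerivAt (fun s => Q (c s) (x s)) (Q (c t) c' * Q (c t) (x t) + Q (c t) x') t :=
  (hQ.comp_hasDerivAt t hc).clm_apply hx

theorem hasDerivAt_two_nsmul_sq_add {A : Type*} [NormedRing A] [NormedAlgebra 𝕜 A]
    {Q : K → K →L[𝕜] A} {x y : 𝕜 → K} {y' : K}
    (hQ : HasFDerivAt Q (resolventDeriv (Q (c t))) (c t)) (hc : HasDerivAt c (x t) t)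
    (hx : HasDerivAt x (y t) t) (hy : HasDerivAt y y' t) :
    HasDerivAt (fun s => 2 • Q (c s) (x s) ^ 2 + Q (c s) (y s))
      (4 • Q (c t) (x t) ^ 3 + 2 • (Q (c t) (y t) * Q (c t) (x t)) +
        3 • (Q (c t) (x t) * Q (c t) (y t)) + Q (c t) y') t := by
  have hQx := hasDerivAt_resolvent_apply hQ hc hx
  have hQy := hasDerivAt_resolvent_apply hQ hc hy
  simp only [sq]
  refine (((hQx.mul hQx).const_smul 2).add hQy).congr_deriv ?_
  noncomm_ring

theorem hasDerivAt_comp_compDeriv {a : 𝕜 → H →L[𝕜] H} {a' : H →L[𝕜] H}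
    (hN : HasFDerivAt N (compDeriv (P (c t)) (N (c t))) (c t)) (hc : HasDerivAt c c' t)
    (ha : HasDerivAt a a' t) :
    HasDerivAt (fun s => (a s).comp (N (c s))) ((a' + a t * P (c t) c').comp (N (c t))) t := by
  refine (ha.clm_comp (hN.comp_hasDerivAt t hc)).congr_deriv ?_
  simp only [Function.comp_apply, compDeriv_apply, add_comp, mul_def, comp_assoc]

theorem deriv_comp_of_hasFDerivAt (hN : HasFDerivAt N (compDeriv (P (c t)) (N (c t))) (c t))
    (hc : DifferentiableAt 𝕜 c t) :
    deriv (fun s => N (c s)) t = (P (c t) (deriv c t)).comp (N (c t)) :=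
  (hN.comp_hasDerivAt t hc.hasDerivAt).deriv

variable {S : Set K}

theorem iteratedDeriv_two_comp (hS : IsOpen S)
    (hN : ∀ τ ∈ S, HasFDerivAt N (compDeriv (P τ) (N τ)) τ)
    (hP : ∀ τ ∈ S, HasFDerivAt P (resolventDeriv (P τ)) τ)
    (hc : ContDiffAt 𝕜 2 c t) (ht : c t ∈ S) :
    iteratedDeriv 2 (fun s => N (c s)) t =
      (2 • P (c t) (deriv c t) ^ 2 + P (c t) (iteratedDeriv 2 c t)).comp (N (c t)) := by
  have hderiv : deriv (fun s => N (c s)) =ᶠ[𝓝 t] fun s => (P (c s) (deriv c s)).comp (N (c s)) := by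
    filter_upwards [hc.eventually (by simp), hc.continuousAt.eventually (hS.mem_nhds ht)]
      with s hs hsS
    exact deriv_comp_of_hasFDerivAt (hN _ hsS) (hs.differentiableAt (by simp))
  have hc₁ : HasDerivAt c (deriv c t) t := (hc.differentiableAt (by simp)).hasDerivAt
  have hc₂ : HasDerivAt (deriv c) (iteratedDeriv 2 c t) t := by
    simpa using hasDerivAt_iteratedDeriv (n := 1) hc
  rw [iteratedDeriv_succ, iteratedDeriv_one, hderiv.deriv_eq,
    (hasDerivAt_comp_compDeriv (hN _ ht) hc₁
      (hasDerivAt_resolvent_apply (hP _ ht) hc₁ hc₂)).deriv]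
  congr 1
  noncomm_ring

theorem iteratedDeriv_three_comp (hS : IsOpen S)
    (hN : ∀ τ ∈ S, HasFDerivAt N (compDeriv (P τ) (N τ)) τ)
    (hP : ∀ τ ∈ S, HasFDerivAt P (resolventDeriv (P τ)) τ)
    (hc : ContDiffAt 𝕜 3 c t) (ht : c t ∈ S) :
    iteratedDeriv 3 (fun s => N (c s)) t =
      (6 • P (c t) (deriv c t) ^ 3 +
        3 • (P (c t) (iteratedDeriv 2 c t) * P (c t) (deriv c t)) +
        3 • (P (c t) (deriv c t) * P (c t) (iteratedDeriv 2 c t)) +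
        P (c t) (iteratedDeriv 3 c t)).comp (N (c t)) := by
  have hderiv : iteratedDeriv 2 (fun s => N (c s)) =ᶠ[𝓝 t] fun s =>
      (2 • P (c s) (deriv c s) ^ 2 + P (c s) (iteratedDeriv 2 c s)).comp (N (c s)) := by
    filter_upwards [hc.eventually (by simp), hc.continuousAt.eventually (hS.mem_nhds ht)]
      with s hs hsS
    exact iteratedDeriv_two_comp hS hN hP (hs.of_le (by norm_num)) hsS
  have hc₁ : HasDerivAt c (deriv c t) t := (hc.differentiableAt (by simp)).hasDerivAt
  have hc₂ : HasDerivAt (deriv c) (iteratedDeriv 2 c t) t := by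
    simpa using hasDerivAt_iteratedDeriv (n := 1) (hc.of_le (by norm_num))
  have hc₃ : HasDerivAt (iteratedDeriv 2 c) (iteratedDeriv 3 c t) t :=
    hasDerivAt_iteratedDeriv (n := 2) hc
  rw [iteratedDeriv_succ, hderiv.deriv_eq,
    (hasDerivAt_comp_compDeriv (hN _ ht) hc₁
      (hasDerivAt_two_nsmul_sq_add (hP _ ht) hc₁ hc₂ hc₃)).deriv]
  congr 1
  noncomm_ring

end Curve

theorem stmt8_general {𝕜 : Type*} [RCLike 𝕜]
    {H : Type*} [NormedAddCommGroup H] [NormedSpace 𝕜 H]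
    {X : Type*} [NormedAddCommGroup X] [NormedSpace 𝕜 X]
    {K : Type*} [NormedAddCommGroup K] [NormedSpace 𝕜 K]
    {B : Type*} [NormedAddCommGroup B] [NormedSpace 𝕜 B]
    {N : K → X →L[𝕜] H} {P : K → K →L[𝕜] H →L[𝕜] H} {S : Set K} (hS : IsOpen S)
    (hN : ∀ τ ∈ S, HasFDerivAt N (compDeriv (P τ) (N τ)) τ)
    (hP : ∀ τ ∈ S, ∀ ξ, HasFDerivAt (fun s => P s ξ) ((resolventDeriv (P τ)).flip ξ) τ)
    {τ : B → K} {ι : B} (hτ : ContDiffAt 𝕜 3 τ ι) (hι : τ ι ∈ S) (η : B) :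
    iteratedFDeriv 𝕜 3 (fun s => N (τ s)) ι (fun _ => η) =
      (6 • P (τ ι) (fderiv 𝕜 τ ι η) ^ 3 +
        3 • (P (τ ι) (iteratedFDeriv 𝕜 2 τ ι fun _ => η) * P (τ ι) (fderiv 𝕜 τ ι η)) +
        3 • (P (τ ι) (fderiv 𝕜 τ ι η) * P (τ ι) (iteratedFDeriv 𝕜 2 τ ι fun _ => η)) +
        P (τ ι) (iteratedFDeriv 𝕜 3 τ ι fun _ => η)).comp (N (τ ι)) := by
  have hPnorm : ∀ σ ∈ S, HasFDerivAt P (resolventDeriv (P σ)) σ := fun σ hσ =>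
    hasFDerivAt_of_eventually_sub_eq_mul
      (eventually_sub_eq_mul_of_hasFDerivAt_apply (hS.mem_nhds hσ) hP)
  have hNsmooth : ContDiffOn 𝕜 3 N S :=
    contDiffOn_of_hasFDerivAt_compDeriv hS (contDiffOn_of_hasFDerivAt_resolventDeriv hS hPnorm 2) hN
  have hNτ : ContDiffAt 𝕜 3 (fun s => N (τ s)) ι :=
    (hNsmooth.contDiffAt (hS.mem_nhds hι)).comp ι hτ
  have hline : ContDiffAt 𝕜 3 (fun t : 𝕜 => τ (ι + t • η)) 0 :=
    ContDiffAt.comp 0 (by simpa using hτ) (by fun_prop)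
  have hderiv : deriv (fun t : 𝕜 => τ (ι + t • η)) 0 = fderiv 𝕜 τ ι η := by
    simpa using iteratedDeriv_comp_add_smul (n := 1) (hτ.of_le (by norm_num)) η
  rw [← iteratedDeriv_comp_add_smul (n := 3) hNτ,
    iteratedDeriv_three_comp hS hN hPnorm hline (by simpa), hderiv,
    iteratedDeriv_comp_add_smul (n := 2) (hτ.of_le (by norm_num)),
    iteratedDeriv_comp_add_smul (n := 3) hτ, zero_smul, add_zero]

/-- The third-derivative formula of Lemma 2.5 (single direction η). -/
theorem stmt8
    {H : Type*} [NormedAddCommGroup H] [InnerProductSpace ℂ H] [CompleteSpace H]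
    {X : Type*} [NormedAddCommGroup X] [InnerProductSpace ℂ X] [FiniteDimensional ℂ X]
    {K : Type*} [NormedAddCommGroup K] [NormedSpace ℂ K]
    {B : Type*} [NormedAddCommGroup B] [NormedSpace ℂ B]
    (N : K → X →L[ℂ] H) (P : K → K →L[ℂ] (H →L[ℂ] H))
    (Kplus : Set K) (hKplus : IsOpen Kplus)
    -- the structure of the derivatives of N and P (Theorem 2.2 and Lemma 2.1)
    (DN : K → K →L[ℂ] (X →L[ℂ] H))
    (hDN : ∀ τ ∈ Kplus, ∀ ξ : K, DN τ ξ = (P τ ξ).comp (N τ))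
    (hNderiv : ∀ τ ∈ Kplus, HasFDerivAt N (DN τ) τ)
    (DP : K → K → K →L[ℂ] (H →L[ℂ] H))
    (hDP : ∀ τ ∈ Kplus, ∀ ξ η : K, DP τ ξ η = (P τ η) * (P τ ξ))
    (hPderiv : ∀ τ ∈ Kplus, ∀ ξ : K, HasFDerivAt (fun s : K => P s ξ) (DP τ ξ) τ)
    -- a twice continuously differentiable parametrization τ : I → K₊
    (I : Set B) (hI : IsOpen I) (τp : B → K) (hmaps : ∀ s ∈ I, τp s ∈ Kplus)
    (hτ : ContDiffOn ℂ 3 τp I)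
    (ι : B) (hι : ι ∈ I) (η : B) :
    (iteratedFDeriv ℂ 3 (fun s : B => N (τp s)) ι) (fun _ => η) =
      (6 • (P (τp ι) (fderiv ℂ τp ι η) ^ 3) +
        3 • (P (τp ι) ((iteratedFDeriv ℂ 2 τp ι) fun _ => η) *
          P (τp ι) (fderiv ℂ τp ι η)) +
        3 • (P (τp ι) (fderiv ℂ τp ι η) *
          P (τp ι) ((iteratedFDeriv ℂ 2 τp ι) fun _ => η)) +
        P (τp ι) ((iteratedFDeriv ℂ 3 τp ι) fun _ => η)).comp (N (τp ι)) := by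
  exact stmt8_general hKplus
    (fun τ hτ => (hNderiv τ hτ).congr_fderiv (ContinuousLinearMap.ext (hDN τ hτ)))
    (fun τ hτ ξ => (hPderiv τ hτ ξ).congr_fderiv (ContinuousLinearMap.ext (hDP τ hτ ξ)))
    (hτ.contDiffAt (hI.mem_nhds hι)) (hmaps ι hι) η
end

section
/- In the same setting, define η₃ := −M[ (1/2) D³Λ̃(0; η₁,η₁,η₁)/3!·6-term-normalization + D²Λ̃(0; η₁, η₂) ], more precisely η₃ = −(1/6) M D³Λ̃(0; η₁³) − M D²Λ̃(0; η₁, η₂) (using symmetry of D²Λ̃). Then η₃ = O(‖υ‖³) and ‖η₁ + η₂ + η₃ − υ‖_B ≤ C‖υ‖_B⁴ for small υ ∈ W. -/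
/-!
Along `W` the Taylor expansion of `Λ`, followed by the left inverse `M` of `F`, reads
`η₁ = υ + A (υ, υ) + T (υ, υ, υ) + O(‖υ‖⁴)` with `A = (1/2) M D²Λ̃(0)` symmetric and
`T = (1/6) M D³Λ̃(0)`. This series is reverted one order at a time: `η₁ - υ = O(‖υ‖²)`, then
`η₁ + η₂ - υ = O(‖υ‖³)`, and these two estimates control, to fourth order, the error made by
writing the quadratic and cubic terms in `η₁` instead of `υ`.
-/

open Asymptotics Filter Topology
open scoped Nat

section Taylor

variable {E G : Type*} [NormedAddCommGroup E] [NormedSpace ℝ E]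
  [NormedAddCommGroup G] [NormedSpace ℝ G] {f : E → G} {x y : E} {n : ℕ}

/-- The value at `x + y` of the `n`-th Taylor polynomial of `f` at `x`, the several-variable
analogue of `taylorWithinEval`. The last argument is the increment `y`, not the point `x + y`. -/
noncomputable def fderivTaylorEval (f : E → G) (n : ℕ) (x y : E) : G :=
  ∑ k ∈ Finset.range (n + 1), (k ! : ℝ)⁻¹ • iteratedFDeriv ℝ k f x fun _ ↦ y

theorem fderivTaylorEval_three (f : E → G) (x y : E) :
    fderivTaylorEval f 3 x y = f x + fderiv ℝ f x y +
      ((1 / 2 : ℝ) • iteratedFDeriv ℝ 2 f x fun _ ↦ y) +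
      (1 / 6 : ℝ) • iteratedFDeriv ℝ 3 f x fun _ ↦ y := by
  simp [fderivTaylorEval, Finset.sum_range_succ, Nat.factorial]

theorem hasDerivAt_iteratedFDeriv_add_smul {t : ℝ} (hf : ContDiffAt ℝ (n + 1) f (x + t • y)) :
    HasDerivAt (fun s : ℝ ↦ iteratedFDeriv ℝ n f (x + s • y) fun _ ↦ y)
      (iteratedFDeriv ℝ (n + 1) f (x + t • y) fun _ ↦ y) t := by
  have hdiff : DifferentiableAt ℝ (iteratedFDeriv ℝ n f) (x + t • y) :=
    hf.differentiableAt_iteratedFDeriv (mod_cast n.lt_succ_self)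
  have hline : DifferentiableAt ℝ (fun s : ℝ ↦ x + s • y) t := by fun_prop
  rw [← hf.deriv_fderiv_add_smul]
  exact ((hdiff.continuousMultilinear_apply_const fun _ ↦ y).comp t hline).hasDerivAt

-- In the derivative of the sum all terms but the last cancel in pairs.
theorem hasDerivAt_sum_iteratedFDeriv_add_smul {t : ℝ}
    (hf : ContDiffAt ℝ (n + 1) f (x + t • y)) :
    HasDerivAt (fun s : ℝ ↦ ∑ k ∈ Finset.range (n + 1),
        ((k ! : ℝ)⁻¹ * (1 - s) ^ k) • iteratedFDeriv ℝ k f (x + s • y) fun _ ↦ y)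
      (((n ! : ℝ)⁻¹ * (1 - t) ^ n) • iteratedFDeriv ℝ (n + 1) f (x + t • y) fun _ ↦ y) t := by
  induction n with
  | zero => simpa using hasDerivAt_iteratedFDeriv_add_smul hf
  | succ n ih =>
    have hcoeff : HasDerivAt (fun s : ℝ ↦ ((n + 1)! : ℝ)⁻¹ * (1 - s) ^ (n + 1))
        (-((n ! : ℝ)⁻¹ * (1 - t) ^ n)) t := by
      refine ((((hasDerivAt_id t).const_sub 1).fun_pow (n + 1)).const_mul _).congr_deriv ?_
      simp [field, Nat.factorial_succ]
    have hlast := hcoeff.fun_smul (hasDerivAt_iteratedFDeriv_add_smul hf)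
    simp_rw [Finset.sum_range_succ _ (n + 1)]
    exact ((ih (hf.of_le (by simp))).fun_add hlast).congr_deriv (by module)

theorem norm_sub_fderivTaylorEval_le {C : ℝ}
    (hf : ∀ t ∈ Set.Icc (0 : ℝ) 1, ContDiffAt ℝ (n + 1) f (x + t • y))
    (hC : ∀ t ∈ Set.Ico (0 : ℝ) 1, ‖iteratedFDeriv ℝ (n + 1) f (x + t • y)‖ ≤ C) :
    ‖f (x + y) - fderivTaylorEval f n x y‖ ≤ C / n ! * ‖y‖ ^ (n + 1) := by
  have hderiv_le : ∀ t ∈ Set.Ico (0 : ℝ) 1,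
      ‖((n ! : ℝ)⁻¹ * (1 - t) ^ n) • iteratedFDeriv ℝ (n + 1) f (x + t • y) fun _ ↦ y‖ ≤
        C / n ! * ‖y‖ ^ (n + 1) := fun t ht ↦ by
    have hcoeff : ‖(n ! : ℝ)⁻¹ * (1 - t) ^ n‖ ≤ (n ! : ℝ)⁻¹ := by
      rw [norm_mul, norm_pow, Real.norm_of_nonneg (sub_nonneg.2 ht.2.le),
        Real.norm_of_nonneg (by positivity)]
      exact mul_le_of_le_one_right (by positivity)
        (pow_le_one₀ (sub_nonneg.2 ht.2.le) (sub_le_self 1 ht.1))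
    have hform : ‖iteratedFDeriv ℝ (n + 1) f (x + t • y) fun _ ↦ y‖ ≤ C * ‖y‖ ^ (n + 1) := by
      simpa using ContinuousMultilinearMap.le_of_opNorm_le (hC t ht) fun _ ↦ y
    calc ‖((n ! : ℝ)⁻¹ * (1 - t) ^ n) • iteratedFDeriv ℝ (n + 1) f (x + t • y) fun _ ↦ y‖
        ≤ (n ! : ℝ)⁻¹ * (C * ‖y‖ ^ (n + 1)) := by rw [norm_smul]; gcongr
      _ = C / n ! * ‖y‖ ^ (n + 1) := by ring
  have hmean := norm_image_sub_le_of_norm_deriv_le_segment_01'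
    (fun t ht ↦ (hasDerivAt_sum_iteratedFDeriv_add_smul (hf t ht)).hasDerivWithinAt) hderiv_le
  simpa [fderivTaylorEval, Finset.sum_range_succ', zero_pow] using hmean

theorem isBigO_sub_fderivTaylorEval (hf : ContDiffAt ℝ (n + 1) f x) :
    (fun y ↦ f (x + y) - fderivTaylorEval f n x y) =O[𝓝 0] fun y ↦ ‖y‖ ^ (n + 1) := by
  set C : ℝ := ‖iteratedFDeriv ℝ (n + 1) f x‖ + 1
  have hbound : ∀ᶠ z in 𝓝 x, ‖iteratedFDeriv ℝ (n + 1) f z‖ < C :=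
    (hf.continuousAt_iteratedFDeriv (k := n + 1) (by simp)).norm.eventually_lt_const
      (lt_add_one _)
  obtain ⟨ε, hε, hball⟩ := Metric.eventually_nhds_iff_ball.1 (hbound.and (hf.eventually (by simp)))
  refine IsBigO.of_bound (C / n !) ?_
  filter_upwards [Metric.ball_mem_nhds (0 : E) hε] with y hy
  have hseg : ∀ t ∈ Set.Icc (0 : ℝ) 1, x + t • y ∈ Metric.ball x ε := fun t ht ↦ by
    rw [mem_ball_iff_norm, add_sub_cancel_left, norm_smul, Real.norm_of_nonneg ht.1]
    exact (mul_le_of_le_one_left (norm_nonneg y) ht.2).trans_lt (mem_ball_zero_iff.1 hy)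
  rw [norm_pow, norm_norm]
  exact norm_sub_fderivTaylorEval_le (fun t ht ↦ (hball _ (hseg t ht)).2)
    fun t ht ↦ (hball _ (hseg t (Set.Ico_subset_Icc_self ht))).1.le

end Taylor

section Multilinear

variable {𝕜 E F G α : Type*} [NontriviallyNormedField 𝕜] [NormedAddCommGroup E] [NormedSpace 𝕜 E]
  [NormedAddCommGroup F] [NormedSpace 𝕜 F] [NormedAddCommGroup G] [NormedSpace 𝕜 G] {l : Filter α}

theorem isBigO_bilinear_apply (A : E →L[𝕜] F →L[𝕜] G) {u : α → E} {v : α → F} {g h : α → ℝ}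
    (hu : u =O[l] g) (hv : v =O[l] h) :
    (fun x ↦ A (u x) (v x)) =O[l] fun x ↦ g x * h x :=
  A.isBoundedBilinearMap.isBigO_comp.trans (hu.norm_left.mul hv.norm_left)

variable {ι : Type*} [Fintype ι] (T : ContinuousMultilinearMap 𝕜 (fun _ : ι ↦ E) G)
  {u v : α → E} {g h : α → ℝ}

theorem isBigO_multilinear_apply_diag (hu : u =O[l] g) :
    (fun x ↦ T fun _ ↦ u x) =O[l] fun x ↦ g x ^ Fintype.card ι := by
  have hle : (fun x ↦ T fun _ ↦ u x) =O[l] fun x ↦ ‖u x‖ ^ Fintype.card ι :=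
    .of_bound ‖T‖ (.of_forall fun x ↦ by simpa using T.le_opNorm fun _ ↦ u x)
  exact hle.trans (hu.norm_left.pow _)

theorem isBigO_multilinear_apply_diag_sub (hu : u =O[l] g) (hv : v =O[l] g)
    (huv : (fun x ↦ u x - v x) =O[l] h) :
    (fun x ↦ (T fun _ ↦ u x) - T fun _ ↦ v x) =O[l]
      fun x ↦ g x ^ (Fintype.card ι - 1) * h x := by
  have hle : (fun x ↦ (T fun _ ↦ u x) - T fun _ ↦ v x) =O[l]
      fun x ↦ (‖u x‖ + ‖v x‖) ^ (Fintype.card ι - 1) * ‖u x - v x‖ := by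
    refine .of_bound (‖T‖ * Fintype.card ι) (.of_forall fun x ↦ ?_)
    calc ‖(T fun _ ↦ u x) - T fun _ ↦ v x‖
        ≤ ‖T‖ * Fintype.card ι * max ‖fun _ : ι ↦ u x‖ ‖fun _ : ι ↦ v x‖ ^ (Fintype.card ι - 1) *
            ‖fun _ : ι ↦ u x - v x‖ := T.norm_image_sub_le _ _
      _ ≤ ‖T‖ * Fintype.card ι * (‖u x‖ + ‖v x‖) ^ (Fintype.card ι - 1) * ‖u x - v x‖ := by
          gcongr
          · exact max_le ((pi_norm_const_le _).trans (le_add_of_nonneg_right (norm_nonneg _)))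
              ((pi_norm_const_le _).trans (le_add_of_nonneg_left (norm_nonneg _)))
          · exact pi_norm_const_le _
      _ = _ := by rw [Real.norm_of_nonneg (by positivity), mul_assoc]
  exact hle.trans (((hu.norm_left.add hv.norm_left).pow _).mul huv.norm_left)

end Multilinear

theorem isBigO_pow_pow_of_isBigO_one {α : Type*} {l : Filter α} {r : α → ℝ}
    (hr : r =O[l] fun _ ↦ (1 : ℝ)) {m n : ℕ} (hmn : m ≤ n) :
    (fun x ↦ r x ^ n) =O[l] fun x ↦ r x ^ m := by
  simpa [← pow_add, Nat.sub_add_cancel hmn] using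
    (hr.pow (n - m)).mul (isBigO_refl (fun x ↦ r x ^ m) l)

section Reversion

variable {𝕜 E α : Type*} [NontriviallyNormedField 𝕜] [NormedAddCommGroup E] [NormedSpace 𝕜 E]
  (A : E →L[𝕜] E →L[𝕜] E) (T : ContinuousMultilinearMap 𝕜 (fun _ : Fin 3 ↦ E) E)

/-- The quadratic term of the formal inverse of `v ↦ v + A (v, v) + T (v, v, v)`: the `η₂` of the
reversion scheme, as a function of `η₁ = u`. -/
def reversionQuadratic (u : E) : E := -A u u

/-- The cubic term of the formal inverse of `v ↦ v + A (v, v) + T (v, v, v)` with `A` symmetric: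
the `η₃` of the reversion scheme, as a function of `η₁ = u`. The factor `2` is due to `A` being
half of a second derivative. -/
def reversionCubic (u : E) : E := -(T fun _ ↦ u) - 2 • A u (reversionQuadratic A u)

variable {A T} {l : Filter α} {u v : α → E} {r : α → ℝ}

theorem isBigO_reversionQuadratic (hu : u =O[l] r) :
    (fun x ↦ reversionQuadratic A (u x)) =O[l] fun x ↦ r x ^ 2 :=
  (isBigO_bilinear_apply A hu hu).neg_left.congr_right fun x ↦ (sq (r x)).symm

theorem isBigO_reversionCubic (hu : u =O[l] r) :
    (fun x ↦ reversionCubic A T (u x)) =O[l] fun x ↦ r x ^ 3 := by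
  have hA : (fun x ↦ A (u x) (reversionQuadratic A (u x))) =O[l] fun x ↦ r x ^ 3 :=
    (isBigO_bilinear_apply A hu (isBigO_reversionQuadratic hu)).congr_right fun x ↦ by ring
  simpa only [reversionCubic, two_smul, Fintype.card_fin] using
    (isBigO_multilinear_apply_diag T hu).neg_left.sub (hA.add hA)

theorem isBigO_sub_of_cubic_expansion (hr : r =O[l] fun _ ↦ (1 : ℝ)) (hv : v =O[l] r)
    (hexp : (fun x ↦ u x - v x - A (v x) (v x) - T fun _ ↦ v x) =O[l] fun x ↦ r x ^ 4) :
    (fun x ↦ u x - v x) =O[l] fun x ↦ r x ^ 2 := by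
  have hA : (fun x ↦ A (v x) (v x)) =O[l] fun x ↦ r x ^ 2 :=
    (isBigO_bilinear_apply A hv hv).congr_right fun x ↦ (sq (r x)).symm
  have hT : (fun x ↦ T fun _ ↦ v x) =O[l] fun x ↦ r x ^ 2 :=
    (isBigO_multilinear_apply_diag T hv).trans (isBigO_pow_pow_of_isBigO_one hr (by simp))
  refine (((hexp.trans (isBigO_pow_pow_of_isBigO_one hr (by simp))).add hA).add hT).congr_left
    fun x ↦ ?_
  abel

theorem isBigO_of_cubic_expansion (hr : r =O[l] fun _ ↦ (1 : ℝ)) (hv : v =O[l] r)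
    (hexp : (fun x ↦ u x - v x - A (v x) (v x) - T fun _ ↦ v x) =O[l] fun x ↦ r x ^ 4) :
    u =O[l] r := by
  have hsub : (fun x ↦ u x - v x) =O[l] r := by
    simpa using (isBigO_sub_of_cubic_expansion hr hv hexp).trans
      (isBigO_pow_pow_of_isBigO_one hr one_le_two)
  simpa using hsub.add hv

theorem isBigO_add_reversionQuadratic_sub (hr : r =O[l] fun _ ↦ (1 : ℝ)) (hv : v =O[l] r)
    (hexp : (fun x ↦ u x - v x - A (v x) (v x) - T fun _ ↦ v x) =O[l] fun x ↦ r x ^ 4) :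
    (fun x ↦ u x + reversionQuadratic A (u x) - v x) =O[l] fun x ↦ r x ^ 3 := by
  have hu : u =O[l] r := isBigO_of_cubic_expansion hr hv hexp
  have hsub := isBigO_sub_of_cubic_expansion hr hv hexp
  have hleft : (fun x ↦ A (u x - v x) (u x)) =O[l] fun x ↦ r x ^ 3 :=
    (isBigO_bilinear_apply A hsub hu).congr_right fun x ↦ by ring
  have hright : (fun x ↦ A (v x) (u x - v x)) =O[l] fun x ↦ r x ^ 3 :=
    (isBigO_bilinear_apply A hv hsub).congr_right fun x ↦ by ring
  have hT : (fun x ↦ T fun _ ↦ v x) =O[l] fun x ↦ r x ^ 3 := isBigO_multilinear_apply_diag T hv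
  refine ((((hexp.trans (isBigO_pow_pow_of_isBigO_one hr (by simp))).add hT).sub hleft).sub
    hright).congr_left fun x ↦ ?_
  simp only [reversionQuadratic, map_sub, sub_apply]
  abel

theorem isBigO_add_reversionQuadratic_add_reversionCubic_sub (hA : ∀ a b, A a b = A b a)
    (hr : r =O[l] fun _ ↦ (1 : ℝ)) (hv : v =O[l] r)
    (hexp : (fun x ↦ u x - v x - A (v x) (v x) - T fun _ ↦ v x) =O[l] fun x ↦ r x ^ 4) :
    (fun x ↦ u x + reversionQuadratic A (u x) + reversionCubic A T (u x) - v x) =O[l]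
      fun x ↦ r x ^ 4 := by
  have hu : u =O[l] r := isBigO_of_cubic_expansion hr hv hexp
  have hsub := isBigO_sub_of_cubic_expansion hr hv hexp
  have hsq : (fun x ↦ A (u x - v x) (u x - v x)) =O[l] fun x ↦ r x ^ 4 :=
    (isBigO_bilinear_apply A hsub hsub).congr_right fun x ↦ by ring
  have hcross : (fun x ↦ A (u x) (u x + reversionQuadratic A (u x) - v x)) =O[l]
      fun x ↦ r x ^ 4 :=
    (isBigO_bilinear_apply A hu (isBigO_add_reversionQuadratic_sub hr hv hexp)).congr_right
      fun x ↦ by ring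
  have hT : (fun x ↦ (T fun _ ↦ u x) - T fun _ ↦ v x) =O[l] fun x ↦ r x ^ 4 :=
    (isBigO_multilinear_apply_diag_sub T hu hv hsub).congr_right fun x ↦ by simp; ring
  -- Complete the square: `A (v, v) - A (u, u) = A (u - v, u - v) - 2 A (u, u - v)`.
  refine (((hexp.add hsq).sub (hcross.add hcross)).sub hT).congr_left fun x ↦ ?_
  simp only [reversionCubic, map_sub, map_add, sub_apply, hA (v x) (u x)]
  simp only [reversionQuadratic]
  abel

end Reversion

section LeftInverse

variable {B Y : Type*} [NormedAddCommGroup B] [NormedSpace ℝ B] [NormedAddCommGroup Y]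
  [NormedSpace ℝ Y] (Λ : B → Y) (M : Y →L[ℝ] B) (x : B)

/-- The normalized second derivative `(1/2) M D²Λ(x)`, the quadratic Taylor coefficient of `M ∘ Λ`
at `x`, as a bilinear map. -/
noncomputable def quadraticCoeff : B →L[ℝ] B →L[ℝ] B :=
  (1 / 2 : ℝ) • (ContinuousLinearMap.compL ℝ B Y B M).comp (fderiv ℝ (fderiv ℝ Λ) x)

/-- The normalized third derivative `(1/6) M D³Λ(x)`, the cubic Taylor coefficient of `M ∘ Λ`
at `x`, as a trilinear map. -/
noncomputable def cubicCoeff : ContinuousMultilinearMap ℝ (fun _ : Fin 3 ↦ B) B :=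
  (1 / 6 : ℝ) • M.compContinuousMultilinearMap (iteratedFDeriv ℝ 3 Λ x)

variable {Λ x}

theorem quadraticCoeff_apply (a b : B) :
    quadraticCoeff Λ M x a b = (1 / 2 : ℝ) • M (iteratedFDeriv ℝ 2 Λ x ![a, b]) := by
  simp [quadraticCoeff, iteratedFDeriv_two_apply]

theorem cubicCoeff_apply (m : Fin 3 → B) :
    cubicCoeff Λ M x m = (1 / 6 : ℝ) • M (iteratedFDeriv ℝ 3 Λ x m) :=
  rfl

theorem quadraticCoeff_comm (hΛ : ContDiffAt ℝ 2 Λ x) (a b : B) :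
    quadraticCoeff Λ M x a b = quadraticCoeff Λ M x b a := by
  have hsymm : IsSymmSndFDerivAt ℝ Λ x := hΛ.isSymmSndFDerivAt (by simp)
  simp [quadraticCoeff, hsymm a b]

variable {M} in
theorem isBigO_cubic_expansion_of_leftInvOn (hΛ : ContDiffAt ℝ 4 Λ x) {F : B →L[ℝ] Y}
    (hF : HasFDerivAt Λ F x) {W : Set B} (hM : Set.LeftInvOn M F W) :
    (fun υ ↦ M (Λ (x + υ) - Λ x) - υ - quadraticCoeff Λ M x υ υ - cubicCoeff Λ M x fun _ ↦ υ)
      =O[𝓝[W] 0] fun υ ↦ ‖υ‖ ^ 4 := by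
  have htaylor : (fun υ ↦ Λ (x + υ) - fderivTaylorEval Λ 3 x υ) =O[𝓝[W] 0] fun υ ↦ ‖υ‖ ^ 4 :=
    (isBigO_sub_fderivTaylorEval (n := 3) (by convert hΛ; norm_num)).mono nhdsWithin_le_nhds
  refine ((M.isBigO_comp _ _).trans htaylor).congr' ?_ .rfl
  filter_upwards [self_mem_nhdsWithin] with υ hυ
  simp only [fderivTaylorEval_three, hF.fderiv, map_sub, map_add, map_smul, hM hυ,
    quadraticCoeff_apply, cubicCoeff_apply, Matrix.vec_single_eq_const, Matrix.vecCons_const]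
  abel

theorem reversionQuadratic_quadraticCoeff (u : B) :
    reversionQuadratic (quadraticCoeff Λ M x) u =
      -((1 / 2 : ℝ) • M (iteratedFDeriv ℝ 2 Λ x ![u, u])) := by
  rw [reversionQuadratic, quadraticCoeff_apply]

theorem reversionCubic_quadraticCoeff_cubicCoeff (u : B) :
    reversionCubic (quadraticCoeff Λ M x) (cubicCoeff Λ M x) u =
      -((1 / 6 : ℝ) • M (iteratedFDeriv ℝ 3 Λ x ![u, u, u])) -
        M (iteratedFDeriv ℝ 2 Λ x ![u, reversionQuadratic (quadraticCoeff Λ M x) u]) := by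
  simp only [reversionCubic, quadraticCoeff_apply, cubicCoeff_apply, Matrix.vec_single_eq_const,
    Matrix.vecCons_const]
  module

end LeftInverse

theorem stmt12_general {B Y : Type*} [NormedAddCommGroup B] [NormedSpace ℝ B]
    [NormedAddCommGroup Y] [NormedSpace ℝ Y] {Λ : B → Y} {x : B} (hΛ : ContDiffAt ℝ 4 Λ x)
    {F : B →L[ℝ] Y} (hF : HasFDerivAt Λ F x) {W : Set B} {M : Y →L[ℝ] B}
    (hM : Set.LeftInvOn M F W) :
    ∃ C : ℝ, ∃ δ > (0 : ℝ), ∀ υ ∈ W, ‖υ‖ < δ →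
      let η₁ := M (Λ (x + υ) - Λ x)
      let η₂ := -((1 / 2 : ℝ) • M ((iteratedFDeriv ℝ 2 Λ x) ![η₁, η₁]))
      let η₃ := -((1 / 6 : ℝ) • M ((iteratedFDeriv ℝ 3 Λ x) ![η₁, η₁, η₁]))
        - M ((iteratedFDeriv ℝ 2 Λ x) ![η₁, η₂])
      ‖η₃‖ ≤ C * ‖υ‖ ^ 3 ∧
      ‖η₁ + η₂ + η₃ - υ‖ ≤ C * ‖υ‖ ^ 4 := by
  have hr : (fun υ : B ↦ ‖υ‖) =O[𝓝[W] 0] fun _ ↦ (1 : ℝ) :=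
    (continuous_norm.continuousWithinAt.tendsto).isBigO_one ℝ
  have hυ : (fun υ : B ↦ υ) =O[𝓝[W] 0] fun υ ↦ ‖υ‖ := (isBigO_refl _ _).norm_right
  have hexp := isBigO_cubic_expansion_of_leftInvOn hΛ hF hM
  have hη₃ := isBigO_reversionCubic (A := quadraticCoeff Λ M x) (T := cubicCoeff Λ M x)
    (isBigO_of_cubic_expansion hr hυ hexp)
  have herr := isBigO_add_reversionQuadratic_add_reversionCubic_sub
    (quadraticCoeff_comm M (hΛ.of_le (by norm_num))) hr hυ hexp
  obtain ⟨C, hC⟩ := ((isBigO_iff_eventually.1 hη₃).and (isBigO_iff_eventually.1 herr)).exists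
  obtain ⟨δ, hδ, hball⟩ := Metric.nhdsWithin_basis_ball.eventually_iff.1 (hC.1.and hC.2)
  refine ⟨C, δ, hδ, fun υ hυW hυδ ↦ ?_⟩
  simpa only [reversionCubic_quadraticCoeff_cubicCoeff, reversionQuadratic_quadraticCoeff,
    norm_pow, norm_norm] using hball ⟨mem_ball_zero_iff.2 hυδ, hυW⟩

/-- Third-order series-reversion estimate: with `η₁ = M(Λ̃(υ) − Λ̃(0))`,
`η₂ = −(1/2) M D²Λ̃(0; η₁, η₁)` and
`η₃ = −(1/6) M D³Λ̃(0; η₁³) − M D²Λ̃(0; η₁, η₂)`, one has `η₃ = O(‖υ‖³)` and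
`‖η₁ + η₂ + η₃ − υ‖ ≤ C‖υ‖⁴` for small `υ ∈ W`. -/
theorem stmt12
    {B : Type*} [NormedAddCommGroup B] [NormedSpace ℝ B]
    {Y : Type*} [NormedAddCommGroup Y] [NormedSpace ℝ Y] [FiniteDimensional ℝ Y]
    (I : Set B) (hI : IsOpen I) (h0 : (0 : B) ∈ I)
    (Λ : B → Y) (hΛ : ContDiffOn ℝ 4 Λ I)
    (F : B →L[ℝ] Y) (hF : HasFDerivAt Λ F 0)
    (W : Submodule ℝ B) (hinj : ∀ x ∈ W, F x = 0 → x = 0)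
    (M : Y →L[ℝ] B) (hM : ∀ w ∈ W, M (F w) = w)
    (hMrange : ∀ y : Y, M y ∈ W) :
    ∃ C : ℝ, ∃ δ > (0 : ℝ), ∀ υ ∈ W, ‖υ‖ < δ → segment ℝ 0 υ ⊆ I →
      let η₁ := M (Λ υ - Λ 0)
      let η₂ := -((1 / 2 : ℝ) • M ((iteratedFDeriv ℝ 2 Λ 0) ![η₁, η₁]))
      let η₃ := -((1 / 6 : ℝ) • M ((iteratedFDeriv ℝ 3 Λ 0) ![η₁, η₁, η₁]))
        - M ((iteratedFDeriv ℝ 2 Λ 0) ![η₁, η₂])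
      ‖η₃‖ ≤ C * ‖υ‖ ^ 3 ∧
      ‖η₁ + η₂ + η₃ - υ‖ ≤ C * ‖υ‖ ^ 4 := by
  obtain ⟨C, δ, hδ, hbound⟩ := stmt12_general (hΛ.contDiffAt (hI.mem_nhds h0)) hF hM
  exact ⟨C, δ, hδ, fun υ hυ hυδ _ ↦ by simpa only [zero_add] using hbound υ hυ hυδ⟩
end
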